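/- Let F be a field with char F ∉ {2, 3} and let H be the Highwater algebra over F. Then H is 2-generated: the smallest subalgebra of H containing a_0 and a_1 is H itself. -/

import Mathlib

/- STATEMENT 10: in characteristic ≠ 2, 3 the Highwater algebra is generated by the\ntwo axes a_0 and a_1: the smallest subalgebra (subspace closed under multiplication)\ncontaining them is everything. -/

/-- The underlying vector space of the Highwater algebra: formal `F`-linear combinations
of basis elements `a_i` (`i : ℤ`, encoded `Sum.inl i`) and `s_j` (`j ≥ 1`, encoded
`Sum.inr (j - 1)`). -/
abbrev HW (F : Type*) [Field F] := (ℤ ⊕ ℕ) →₀ F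

variable (F : Type*) [Field F]

/-- The axis `a_i` of the Highwater algebra. -/
noncomputable def hwa (i : ℤ) : HW F := Finsupp.single (Sum.inl i) 1

/-- The element `s_j` of the Highwater algebra (`s_0 = 0`). -/
noncomputable def hws : ℕ → HW F
  | 0 => 0
  | j + 1 => Finsupp.single (Sum.inr j) 1

/-- Product of two basis elements of the Highwater algebra:
`a_i · a_k = (1/2)(a_i + a_k) + s_{|i-k|}`,
`a_i · s_j = -(3/4) a_i + (3/8)(a_{i-j} + a_{i+j}) + (3/2) s_j`,
`s_j · s_k = (3/4)(s_j + s_k) - (3/8)(s_{|j-k|} + s_{j+k})`. -/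
noncomputable def hwBM : ℤ ⊕ ℕ → ℤ ⊕ ℕ → HW F
  | Sum.inl i, Sum.inl k => ((1 : F) / 2) • (hwa F i + hwa F k) + hws F (i - k).natAbs
  | Sum.inl i, Sum.inr j =>
      (-(3 : F) / 4) • hwa F i
        + ((3 : F) / 8) • (hwa F (i - ((j : ℤ) + 1)) + hwa F (i + ((j : ℤ) + 1)))
        + ((3 : F) / 2) • hws F (j + 1)
  | Sum.inr j, Sum.inl i =>
      (-(3 : F) / 4) • hwa F i
        + ((3 : F) / 8) • (hwa F (i - ((j : ℤ) + 1)) + hwa F (i + ((j : ℤ) + 1)))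
        + ((3 : F) / 2) • hws F (j + 1)
  | Sum.inr j, Sum.inr k =>
      ((3 : F) / 4) • (hws F (j + 1) + hws F (k + 1))
        - ((3 : F) / 8) • (hws F ((j : ℤ) - (k : ℤ)).natAbs + hws F (j + k + 2))

/-- The multiplication of the Highwater algebra: the bilinear extension of `hwBM`. -/
noncomputable def hwMul (x y : HW F) : HW F :=
  x.sum fun i ci => y.sum fun j cj => (ci * cj) • hwBM F i j

theorem hwMul_single_single (i j : ℤ ⊕ ℕ) :
    hwMul F (Finsupp.single i 1) (Finsupp.single j 1) = hwBM F i j := by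
  simp [hwMul]

theorem hwMul_hwa_hwa (i k : ℤ) :
    hwMul F (hwa F i) (hwa F k) =
      ((1 : F) / 2) • (hwa F i + hwa F k) + hws F (i - k).natAbs :=
  hwMul_single_single F _ _

theorem hwMul_hwa_hws_one (i : ℤ) :
    hwMul F (hwa F i) (hws F 1) =
      (-(3 : F) / 4) • hwa F i + ((3 : F) / 8) • (hwa F (i - 1) + hwa F (i + 1))
        + ((3 : F) / 2) • hws F 1 := by
  refine (hwMul_single_single F (Sum.inl i) (Sum.inr 0)).trans ?_
  simp [hwBM]

theorem three_ne_zero_of_ringChar_ne_three (h3 : ringChar F ≠ 3) : (3 : F) ≠ 0 := by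
  intro h
  have hdvd : ringChar F ∣ 3 := ringChar.dvd (by exact_mod_cast h)
  rcases (Nat.dvd_prime Nat.prime_three).1 hdvd with h1 | h1
  · exact CharP.ringChar_ne_one h1
  · exact h3 h1

section Subalgebra

variable {F} {W : Submodule F (HW F)}

theorem hws_natAbs_sub_mem (hW : ∀ x ∈ W, ∀ y ∈ W, hwMul F x y ∈ W)
    {i k : ℤ} (hi : hwa F i ∈ W) (hk : hwa F k ∈ W) :
    hws F (i - k).natAbs ∈ W := by
  have h := hW _ hi _ hk
  rw [hwMul_hwa_hwa] at h
  exact (W.add_mem_iff_right (W.smul_mem _ (W.add_mem hi hk))).1 h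

theorem hwa_sub_one_add_hwa_add_one_mem (hW : ∀ x ∈ W, ∀ y ∈ W, hwMul F x y ∈ W)
    (h2 : (2 : F) ≠ 0) (h3 : (3 : F) ≠ 0)
    (hs : hws F 1 ∈ W) {i : ℤ} (hi : hwa F i ∈ W) :
    hwa F (i - 1) + hwa F (i + 1) ∈ W := by
  have h := hW _ hi _ hs
  rw [hwMul_hwa_hws_one, W.add_mem_iff_left (W.smul_mem _ hs),
    W.add_mem_iff_right (W.smul_mem _ hi)] at h
  have h8 : (8 : F) ≠ 0 := by
    rw [show (8 : F) = 2 ^ 3 by norm_num]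
    exact pow_ne_zero 3 h2
  exact (W.smul_mem_iff (div_ne_zero h3 h8)).1 h

theorem hwa_mem (hW : ∀ x ∈ W, ∀ y ∈ W, hwMul F x y ∈ W)
    (h2 : (2 : F) ≠ 0) (h3 : (3 : F) ≠ 0)
    (h0 : hwa F 0 ∈ W) (h1 : hwa F 1 ∈ W) (i : ℤ) : hwa F i ∈ W := by
  have hs : hws F 1 ∈ W := by simpa using hws_natAbs_sub_mem hW h1 h0
  have step {k : ℤ} := hwa_sub_one_add_hwa_add_one_mem hW h2 h3 hs (i := k)
  suffices hwa F i ∈ W ∧ hwa F (i + 1) ∈ W from this.1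
  induction i with
  | zero => exact ⟨h0, h1⟩
  | succ n ih =>
    refine ⟨ih.2, (W.add_mem_iff_right ih.1).1 ?_⟩
    simpa using step ih.2
  | pred n ih =>
    have h := (W.add_mem_iff_left ih.2).1 (step ih.1)
    exact ⟨h, by simpa using ih.1⟩

end Subalgebra

theorem highwater_two_generated (h2 : ringChar F ≠ 2) (h3 : ringChar F ≠ 3) :
    ∀ W : Submodule F (HW F), (∀ x ∈ W, ∀ y ∈ W, hwMul F x y ∈ W) →
      hwa F 0 ∈ W → hwa F 1 ∈ W → W = ⊤ := by
  intro W hW h0 h1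
  have ha := hwa_mem hW (Ring.two_ne_zero h2) (three_ne_zero_of_ringChar_ne_three F h3) h0 h1
  have hbasis (b : ℤ ⊕ ℕ) : Finsupp.single b (1 : F) ∈ W := by
    rcases b with i | j
    · exact ha i
    · have h := hws_natAbs_sub_mem hW (ha ((j + 1 : ℕ) : ℤ)) h0
      rwa [sub_zero, Int.natAbs_natCast] at h
  refine eq_top_iff.2 fun x _ => ?_
  rw [← Finsupp.sum_single x]
  refine W.sum_mem fun b _ => ?_
  rw [← Finsupp.smul_single_one]
  exact W.smul_mem _ (hbasis b)
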